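/- Let r, d, k, t ∈ ℕ with k ≥ 1 and 2kt ≤ 3^{d−1}, and let B : P_{r,2d} → ℂ satisfy B̂(α) = 0 for all α ∈ Λ_{r,2d} with |α| > t. Let B' : 𝔉_r → ℂ be the lift of B, i.e., B' := Σ_{α ∈ Λ_{r,2d}} B̂(α)·χ_α where the χ_α on the right-hand side are characters of 𝔉_r. Then ‖B‖_{2k} = ‖B'‖_{2k}, where ‖B‖_{2k} := (E_{f∈P_{r,2d}}|B(f)|^{2k})^{1/2k} and ‖B'‖_{2k} := (E_{f∈𝔉_r}|B'(f)|^{2k})^{1/2k}. -/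

import Mathlib

open scoped BigOperators

abbrev F3 := ZMod 3
abbrev Pt (r : ℕ) := Fin r → F3
abbrev Fn (r : ℕ) := Pt r → F3

/-- The set of functions `F₃^r → F₃` computed by polynomials of total degree at most `d`
with individual degrees at most `2`. -/
def PolySet (r d : ℕ) : Set (Fn r) :=
  {g | ∃ P : MvPolynomial (Fin r) F3,
        P.totalDegree ≤ d ∧ (∀ i, P.degreeOf i ≤ 2) ∧
        ∀ x, g x = MvPolynomial.eval x P}

noncomputable def polyFinset (r d : ℕ) : Finset (Fn r) :=
  (Set.toFinite (PolySet r d)).toFinset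

/-- Support size `|β|`. -/
def supp {r : ℕ} (β : Fn r) : ℕ := (Finset.univ.filter fun x => β x ≠ 0).card

/-- Dot product `⟨β, f⟩ = Σ_x β(x) f(x)` in `F₃`. -/
def dotF {r : ℕ} (β f : Fn r) : F3 := ∑ x, β x * f x

noncomputable def ω : ℂ := Complex.exp (2 * (Real.pi : ℂ) * Complex.I / 3)

/-- The character `χ_β(f) = ω^{⟨β,f⟩}`. -/
noncomputable def chi {r : ℕ} (β f : Fn r) : ℂ := ω ^ (dotF β f).val

/-- The dual `S^⊥` of a set of functions. -/
def dualSet (r : ℕ) (S : Set (Fn r)) : Set (Fn r) := {g | ∀ h ∈ S, dotF g h = 0}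

/-- `Λ` contains exactly one representative, of minimal support size, from each coset
of `𝔉_r` modulo `P_{r,d}^⊥`. -/
def IsMinRepSet (r d : ℕ) (Λ : Finset (Fn r)) : Prop :=
  (∀ β : Fn r, ∃! β', β' ∈ Λ ∧ β - β' ∈ dualSet r (PolySet r d)) ∧
  (∀ β' ∈ Λ, ∀ γ : Fn r, β' - γ ∈ dualSet r (PolySet r d) → supp β' ≤ supp γ)

/-- The noise `a·(p² + 1)` (pointwise). -/
def shift {r : ℕ} (p : Fn r) (a : F3) : Fn r := fun x => a * (p x ^ 2 + 1)

/-- Fourier coefficient `Â(β)` of a function on `P_{r,d}`. -/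
noncomputable def fourierP (r d : ℕ) (A : Fn r → ℂ) (β : Fn r) : ℂ :=
  (∑ g ∈ polyFinset r d, A g * (starRingEnd ℂ) (chi β g)) / ((polyFinset r d).card : ℂ)

/-- Expectation `E_{f ∈ P_{r,d}}[A(f)]`. -/
noncomputable def expP (r d : ℕ) (A : Fn r → ℝ) : ℝ :=
  (∑ f ∈ polyFinset r d, A f) / ((polyFinset r d).card : ℝ)

/-- Degree-`k` influence `Inf_x^{≤k}(A)` with respect to a set `Λ` of minimal-support
coset representatives. -/
noncomputable def infP (r d k : ℕ) (Λ : Finset (Fn r)) (A : Fn r → ℝ) (x : Pt r) : ℝ :=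
  ∑ β ∈ Λ.filter (fun β => β x ≠ 0 ∧ supp β ≤ k),
    ‖fourierP r d (fun g => (A g : ℂ)) β‖ ^ 2

/-! Expanding `|B'|^(2k)` as `(B' · conj B')^k` gives a combination of characters `χ_γ` with
`|γ| ≤ 2kt`. Averaging over the whole space or over the code `P_{r,2d}` keeps exactly those `χ_γ`
that are trivial there, so the two averages agree as soon as every nonzero word of the dual code has
weight greater than `2kt`. By Fourier inversion on the code, `B'` restricts to `B`.

The dual distance of the Reed–Muller code is bounded by induction on the degree: choose a coordinate
taking `e + 1 ≥ 2` values on the support of a dual word `β`. Each of the `e + 1` fibres of `β` is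
nonzero and orthogonal to all polynomials whose degree is smaller by `e`, because multiplying by a
Lagrange basis polynomial of degree `e` isolates the fibre. -/

section ReedMuller

open MvPolynomial

/-- The generalized Reed–Muller code of order `D`: the functions `σ → K → K` given by polynomials
of total degree at most `D`. Reducing exponents modulo `a ^ q = a` shows that restricting the
individual degrees to at most `q - 1`, as is often done, gives the same code. -/
noncomputable def reedMuller (σ K : Type*) [Field K] (D : ℕ) : Submodule K ((σ → K) → K) :=
  (restrictTotalDegree σ K D).map (evalₗ K σ)

/-- The minimum distance `(b + 1) q ^ a`, where `D = a (q - 1) + b` with `b < q - 1`, of the dual of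
the generalized Reed–Muller code of order `D - 1` over the field with `q` elements (in sufficiently
many variables). -/
def reedMullerDualDist (q D : ℕ) : ℕ := (D % (q - 1) + 1) * q ^ (D / (q - 1))

variable {σ K : Type*} [Field K]

lemma mem_reedMuller {D : ℕ} {f : (σ → K) → K} :
    f ∈ reedMuller σ K D ↔
      ∃ P : MvPolynomial σ K, P.totalDegree ≤ D ∧ ∀ x, f x = eval x P := by
  simp only [reedMuller, Submodule.mem_map, mem_restrictTotalDegree, funext_iff, evalₗ_apply,
    eq_comm]

lemma exists_pow_eq_pow_le_card_sub_one [Fintype K] (n : ℕ) :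
    ∃ m ≤ n, m ≤ Fintype.card K - 1 ∧ ∀ a : K, a ^ m = a ^ n := by
  induction n using Nat.strong_induction_on with
  | _ n ih =>
    have hq : 1 < Fintype.card K := Fintype.one_lt_card
    obtain hn | hn := le_or_gt n (Fintype.card K - 1)
    · exact ⟨n, le_rfl, hn, fun _ => rfl⟩
    · obtain ⟨m, _, hm, hpow⟩ := ih (n - Fintype.card K + 1) (by lia)
      refine ⟨m, by lia, hm, fun a => ?_⟩
      calc a ^ m = a ^ (n - Fintype.card K) * a ^ Fintype.card K := by
            rw [hpow, pow_succ, FiniteField.pow_card]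
        _ = a ^ n := by rw [← pow_add, Nat.sub_add_cancel (by lia)]

lemma exists_degreeOf_le_eval_eq [Fintype K] (P : MvPolynomial σ K) :
    ∃ Q : MvPolynomial σ K, Q.totalDegree ≤ P.totalDegree ∧
      (∀ i, Q.degreeOf i ≤ Fintype.card K - 1) ∧ ∀ x, eval x Q = eval x P := by
  choose red hred_le hred_card hred_pow using exists_pow_eq_pow_le_card_sub_one (K := K)
  have hred_zero : red 0 = 0 := Nat.le_zero.mp (hred_le 0)
  refine ⟨∑ s ∈ P.support, monomial (s.mapRange red hred_zero) (P.coeff s),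
    totalDegree_finsetSum_le fun s hs => ?_, fun i => ?_, fun x => ?_⟩
  · calc (monomial (s.mapRange red hred_zero) (P.coeff s)).totalDegree
        ≤ (s.mapRange red hred_zero).sum fun _ n => n := totalDegree_monomial_le _ _
      _ = s.sum fun _ n => red n := Finsupp.sum_mapRange_index fun _ => rfl
      _ ≤ s.sum fun _ n => n := Finset.sum_le_sum fun i _ => hred_le (s i)
      _ ≤ P.totalDegree := le_totalDegree hs
  · refine (degreeOf_sum_le _ _ _).trans (Finset.sup_le fun s _ => ?_)
    refine degreeOf_le_iff.mpr fun u hu => ?_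
    rw [Finset.mem_singleton.mp (support_monomial_subset hu)]
    exact hred_card (s i)
  · conv_rhs => rw [P.as_sum]
    simp only [map_sum, eval_monomial]
    refine Finset.sum_congr rfl fun s _ => ?_
    rw [Finsupp.prod_mapRange_index fun _ => pow_zero _]
    simp only [hred_pow]

lemma reedMullerDualDist_zero (q : ℕ) : reedMullerDualDist q 0 = 1 := by
  simp [reedMullerDualDist]

lemma reedMullerDualDist_add_le {q e : ℕ} (he : e < q) (D : ℕ) :
    reedMullerDualDist q (D + e) ≤ (e + 1) * reedMullerDualDist q D := by
  obtain ⟨Q, rfl⟩ : ∃ Q, q = Q + 1 := ⟨q - 1, by lia⟩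
  obtain rfl | hQ := Q.eq_zero_or_pos
  · obtain rfl : e = 0 := by lia
    simp
  simp only [reedMullerDualDist, Nat.add_sub_cancel]
  obtain ⟨a, b, hb, rfl⟩ : ∃ a b, b < Q ∧ D = b + Q * a :=
    ⟨D / Q, D % Q, Nat.mod_lt _ hQ, (Nat.mod_add_div D Q).symm⟩
  have hD := (Nat.div_mod_unique (a := b + Q * a) (d := a) hQ).mpr ⟨rfl, hb⟩
  rw [hD.1, hD.2]
  obtain hlt | hge := lt_or_ge (b + e) Q
  · have hDe := (Nat.div_mod_unique (a := b + Q * a + e) (d := a) hQ).mpr ⟨by ring, hlt⟩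
    rw [hDe.1, hDe.2, ← mul_assoc]
    gcongr
    nlinarith
  · obtain ⟨c, hc⟩ := Nat.exists_eq_add_of_le hge
    have hDe := (Nat.div_mod_unique (a := b + Q * a + e) (c := c) (d := a + 1) hQ).mpr
      ⟨by linarith, by lia⟩
    rw [hDe.1, hDe.2, pow_succ', ← mul_assoc, ← mul_assoc]
    refine Nat.mul_le_mul_right _ ?_
    obtain ⟨u, rfl⟩ := Nat.exists_eq_add_of_lt hb
    obtain rfl : e = u + 1 + c := by lia
    obtain ⟨v, rfl⟩ : ∃ v, b = c + v := Nat.exists_eq_add_of_le (by lia)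
    nlinarith

lemma reedMullerDualDist_le_mul_sub {q e : ℕ} (he : e < q) (D : ℕ) :
    reedMullerDualDist q D ≤ (e + 1) * reedMullerDualDist q (D - e) := by
  obtain hle | hlt := le_or_gt e D
  · simpa [Nat.sub_add_cancel hle] using reedMullerDualDist_add_le he (D - e)
  · have h := reedMullerDualDist_add_le (hlt.trans he) 0
    rw [zero_add, reedMullerDualDist_zero] at h
    rw [Nat.sub_eq_zero_of_le hlt.le, reedMullerDualDist_zero]
    lia

lemma totalDegree_toMvPolynomial_le (i : σ) (p : Polynomial K) :
    (p.toMvPolynomial i).totalDegree ≤ p.natDegree := by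
  conv_lhs => rw [p.as_sum_range_C_mul_X_pow, map_sum]
  refine totalDegree_finsetSum_le fun n hn => ?_
  rw [map_mul, map_pow, Polynomial.toMvPolynomial_C, Polynomial.toMvPolynomial_X]
  refine (totalDegree_mul _ _).trans ?_
  rw [totalDegree_C, totalDegree_X_pow, zero_add]
  exact Nat.lt_succ_iff.mp (Finset.mem_range.mp hn)

lemma exists_ne_zero_ne_of_sum_eq_zero {α G : Type*} [Fintype α] [AddCommMonoid G] {f : α → G}
    (hf : f ≠ 0) (hsum : ∑ x, f x = 0) : ∃ x y, f x ≠ 0 ∧ f y ≠ 0 ∧ y ≠ x := by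
  obtain ⟨x, hx⟩ := Function.ne_iff.mp hf
  by_contra! h
  have hzero (y : α) (hy : y ≠ x) : f y = 0 := by_contra fun hne => hy (h x y hx hne)
  exact hx (Fintype.sum_eq_single x hzero ▸ hsum)

variable [DecidableEq K] [Fintype K] [Fintype σ] [DecidableEq σ]

lemma sum_mul_eval_fiber_eq_zero {D : ℕ} {β : (σ → K) → K}
    (hβ : ∀ P : MvPolynomial σ K, P.totalDegree < D → ∑ x, β x * eval x P = 0)
    {i : σ} {T : Finset K} (hT : ∀ x, β x ≠ 0 → x i ∈ T) {c : K} (hc : c ∈ T)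
    (P : MvPolynomial σ K) (hP : P.totalDegree < D - (T.card - 1)) :
    ∑ x, (if x i = c then β x else 0) * eval x P = 0 := by
  set L := Lagrange.basis T id c
  have hL : L.natDegree = T.card - 1 := Lagrange.natDegree_basis Function.injective_id.injOn hc
  have hdeg : (L.toMvPolynomial i * P).totalDegree < D := by
    have hmul := totalDegree_mul (L.toMvPolynomial i) P
    have hLdeg := totalDegree_toMvPolynomial_le i L
    lia
  refine (Finset.sum_congr rfl fun x _ => ?_).trans (hβ (L.toMvPolynomial i * P) hdeg)
  rw [map_mul, eval_toMvPolynomial]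
  obtain hx | hx := eq_or_ne (β x) 0
  · simp [hx]
  split_ifs with hxc
  · have hL1 : L.eval (x i) = 1 := hxc ▸ Lagrange.eval_basis_self Function.injective_id.injOn hc
    rw [hL1, one_mul]
  · have hL0 : L.eval (x i) = 0 :=
      Lagrange.eval_basis_of_ne (v := id) (Ne.symm hxc) (hT x hx)
    rw [hL0, zero_mul, mul_zero]

theorem reedMullerDualDist_le_hammingNorm {D : ℕ} {β : (σ → K) → K} (hβ0 : β ≠ 0)
    (hβ : ∀ P : MvPolynomial σ K, P.totalDegree < D → ∑ x, β x * eval x P = 0) :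
    reedMullerDualDist (Fintype.card K) D ≤ hammingNorm β := by
  induction D using Nat.strong_induction_on generalizing β with
  | _ D ih =>
    obtain rfl | hD := D.eq_zero_or_pos
    · rw [reedMullerDualDist_zero]
      exact hammingNorm_pos_iff.mpr hβ0
    obtain ⟨x, y, hx, hy, hyx⟩ : ∃ x y, β x ≠ 0 ∧ β y ≠ 0 ∧ y ≠ x :=
      exists_ne_zero_ne_of_sum_eq_zero hβ0 (by simpa using hβ 1 (by simpa using hD))
    obtain ⟨i, hi⟩ := Function.ne_iff.mp hyx
    set S : Finset (σ → K) := {z | β z ≠ 0}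
    set T : Finset K := S.image fun z => z i
    have hmemT : ∀ z, β z ≠ 0 → z i ∈ T := fun z hz =>
      Finset.mem_image_of_mem _ (Finset.mem_filter_univ z |>.mpr hz)
    have hT_gt : 1 < T.card := Finset.one_lt_card.mpr ⟨y i, hmemT y hy, x i, hmemT x hx, hi⟩
    have hT_le : T.card ≤ Fintype.card K := T.card_le_univ
    have hfiber : ∀ c ∈ T, reedMullerDualDist (Fintype.card K) (D - (T.card - 1)) ≤
        (S.filter fun z => z i = c).card := by
      intro c hc
      obtain ⟨z, hz, rfl⟩ := Finset.mem_image.mp hc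
      have hne : (fun w : σ → K => if w i = z i then β w else 0) ≠ 0 :=
        Function.ne_iff.mpr ⟨z, by simpa [S] using hz⟩
      refine (ih (D - (T.card - 1)) (by lia) hne
        (sum_mul_eval_fiber_eq_zero hβ hmemT hc)).trans_eq ?_
      simp only [hammingNorm, S, Finset.filter_filter]
      congr 1
      ext w
      simp [and_comm]
    calc reedMullerDualDist (Fintype.card K) D
        ≤ (T.card - 1 + 1) * reedMullerDualDist (Fintype.card K) (D - (T.card - 1)) :=
          reedMullerDualDist_le_mul_sub (by lia) D
      _ = T.card • reedMullerDualDist (Fintype.card K) (D - (T.card - 1)) := by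
          rw [Nat.sub_add_cancel hT_gt.le, smul_eq_mul]
      _ ≤ ∑ c ∈ T, (S.filter fun z => z i = c).card := Finset.card_nsmul_le_sum _ _ _ hfiber
      _ = S.card := (Finset.card_eq_sum_card_image _ _).symm

end ReedMuller

section Codes

open scoped ComplexConjugate

variable {R ι M : Type*} [CommRing R] [Fintype ι] [CommMonoid M]

/-- The dual code `C^⊥` with respect to the dot product. -/
def dualCode (C : Submodule R (ι → R)) : Submodule R (ι → R) :=
  C.orthogonalBilin (dotProductBilin R R)

lemma mem_dualCode {C : Submodule R (ι → R)} {γ : ι → R} :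
    γ ∈ dualCode C ↔ ∀ f ∈ C, γ ⬝ᵥ f = 0 := by
  simp only [dualCode, Submodule.mem_orthogonalBilin_iff, dotProductBilin_apply_apply,
    dotProduct_comm]

/-- The character `f ↦ ψ (α ⬝ᵥ f)` of `ι → R`, as a homomorphism in `α`; for `R = F₃` and
`ψ c = ω ^ c` it is the character `χ_α`. -/
def dotChar (ψ : AddChar R M) : (ι → R) →+ AddChar (ι → R) M where
  toFun α := ψ.compAddMonoidHom (dotProductBilin R R α).toAddMonoidHom
  map_zero' := by ext f; simp
  map_add' α β := by ext f; simp [AddChar.map_add_eq_mul]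

lemma dotChar_apply (ψ : AddChar R M) (α f : ι → R) : dotChar ψ α f = ψ (α ⬝ᵥ f) := rfl

/-- The restriction of the character `dotChar ψ α` to the code `C`. -/
def codeChar (ψ : AddChar R M) (C : Submodule R (ι → R)) : (ι → R) →+ AddChar C M where
  toFun α := (dotChar ψ α).compAddMonoidHom C.subtype.toAddMonoidHom
  map_zero' := by ext f; simp
  map_add' α β := by ext f; simp

lemma codeChar_apply (ψ : AddChar R M) (C : Submodule R (ι → R)) (α : ι → R) (f : C) :
    codeChar ψ C α f = ψ (α ⬝ᵥ f) := rfl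

lemma codeChar_eq_zero_iff {ψ : AddChar R M} (hψ : ψ.IsPrimitive) {C : Submodule R (ι → R)}
    {γ : ι → R} : codeChar ψ C γ = 0 ↔ γ ∈ dualCode C := by
  rw [mem_dualCode, DFunLike.ext_iff]
  refine ⟨fun h f hf => by_contra fun hne => hψ hne ?_, fun h f => ?_⟩
  · ext a
    simpa [codeChar_apply, AddChar.mulShift_apply, mul_comm] using h (a • ⟨f, hf⟩)
  · simp [codeChar_apply, h f f.2]

lemma dotChar_eq_zero_iff {ψ : AddChar R M} (hψ : ψ.IsPrimitive) {γ : ι → R} :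
    dotChar ψ γ = 0 ↔ γ = 0 := by
  classical
  refine ⟨fun h => funext fun i => by_contra fun hne => hψ hne ?_, fun h => by simp [h]⟩
  ext a
  simpa [dotChar_apply, AddChar.mulShift_apply] using DFunLike.congr_fun h (Pi.single i a)

section Fourier

lemma sum_expect_mul_conj_mul_apply {G : Type*} [AddCommGroup G] [Fintype G] (B : G → ℂ) (f : G) :
    ∑ χ : AddChar G ℂ, (𝔼 g, B g * conj (χ g)) * χ f = B f := by
  classical
  have hG : (Fintype.card G : ℂ) ≠ 0 := Nat.cast_ne_zero.mpr Fintype.card_ne_zero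
  calc ∑ χ : AddChar G ℂ, (𝔼 g, B g * conj (χ g)) * χ f
      = (∑ g, B g * ∑ χ : AddChar G ℂ, χ (f - g)) / Fintype.card G := by
        simp only [Fintype.expect_eq_sum_div_card, div_mul_eq_mul_div, Finset.sum_mul,
          Finset.mul_sum, ← Finset.sum_div]
        rw [Finset.sum_comm]
        simp only [sub_eq_neg_add, AddChar.map_add_eq_mul, AddChar.map_neg_eq_conj, mul_assoc]
    _ = B f := by
        simp only [AddChar.sum_apply_eq_ite, sub_eq_zero, mul_ite, mul_zero, Finset.sum_ite_eq,
          Finset.mem_univ, if_true]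
        rw [mul_div_cancel_right₀ _ hG]

variable {ψ : AddChar R ℂ} {C : Submodule R (ι → R)}

/- If `χ` were not hit, every row sum (over `c`) of the matrix `χ(c) χ_α(-c)` would vanish, whereas
its column sums add up to the number of vectors `α`. -/
lemma codeChar_surjective [Finite R] (hψ : ψ.IsPrimitive) (C : Submodule R (ι → R)) :
    Function.Surjective (codeChar ψ C) := by
  classical
  have := Fintype.ofFinite C
  have := Fintype.ofFinite (ι → R)
  intro χ
  by_contra! hχ
  have hrow (α : ι → R) : ∑ c : C, χ c * ψ (α ⬝ᵥ (-c : C)) = 0 := by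
    rw [← AddChar.sum_eq_zero_iff_ne_zero.mpr (sub_ne_zero.mpr (hχ α).symm)]
    simp [AddChar.sub_apply, codeChar_apply]
  have hcol (c : C) : ∑ α : ι → R, χ c * ψ (α ⬝ᵥ (-c : C)) =
      if c = 0 then (Fintype.card (ι → R) : ℂ) else 0 := by
    have hsum := AddChar.sum_eq_ite (dotChar ψ ((-c : C) : ι → R))
    simp only [dotChar_apply, dotChar_eq_zero_iff hψ] at hsum
    simp only [← Finset.mul_sum, dotProduct_comm _ ((-c : C) : ι → R), hsum]
    obtain rfl | hc := eq_or_ne c 0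
    · simp
    · simp [hc]
  have hcard : (Fintype.card (ι → R) : ℂ) = 0 :=
    calc (Fintype.card (ι → R) : ℂ) = ∑ c : C, ∑ α : ι → R, χ c * ψ (α ⬝ᵥ (-c : C)) := by
          simp only [hcol, Finset.sum_ite_eq', Finset.mem_univ, if_true]
      _ = ∑ α : ι → R, ∑ c : C, χ c * ψ (α ⬝ᵥ (-c : C)) := Finset.sum_comm
      _ = 0 := by simp only [hrow, Finset.sum_const_zero]
  exact Nat.cast_ne_zero.mpr Fintype.card_ne_zero hcard

/-- The Fourier coefficient `B̂(α) = E_{g ∈ C} B(g) · conj χ_α(g)` of a function on the code `C`. -/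
noncomputable def codeFourierCoeff [Fintype C] (ψ : AddChar R ℂ) (B : C → ℂ) (α : ι → R) : ℂ :=
  𝔼 g, B g * conj (codeChar ψ C α g)

/-- The lift `B' = ∑_{α ∈ Λ} B̂(α) χ_α` of a function on the code `C` to the ambient space. -/
noncomputable def codeLift [Fintype C] (ψ : AddChar R ℂ) (Λ : Finset (ι → R)) (B : C → ℂ) :
    (ι → R) → ℂ :=
  ∑ α ∈ Λ, codeFourierCoeff ψ B α • ⇑(dotChar ψ α)

lemma codeLift_coe [Finite R] [Fintype C] (hψ : ψ.IsPrimitive) {Λ : Finset (ι → R)}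
    (hΛ : ∀ β, ∃! α, α ∈ Λ ∧ β - α ∈ dualCode C) (B : C → ℂ) (f : C) :
    codeLift ψ Λ B f = B f := by
  classical
  have hcodeChar {α β : ι → R} : codeChar ψ C α = codeChar ψ C β ↔ α - β ∈ dualCode C := by
    rw [← codeChar_eq_zero_iff hψ, map_sub, sub_eq_zero]
  rw [← sum_expect_mul_conj_mul_apply B f, codeLift, Finset.sum_apply]
  refine Finset.sum_bij (fun α _ => codeChar ψ C α) (fun _ _ => Finset.mem_univ _)
    (fun α hα β hβ h => ?_) (fun χ _ => ?_) (fun _ _ => rfl)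
  · exact (hΛ α).unique ⟨hα, by simp⟩ ⟨hβ, hcodeChar.mp h⟩
  · obtain ⟨β, rfl⟩ := codeChar_surjective hψ C χ
    obtain ⟨α, ⟨hα, hβα⟩, -⟩ := hΛ β
    exact ⟨α, hα, (hcodeChar.mpr hβα).symm⟩

end Fourier

section LowWeight

lemma hammingNorm_add_le {G : ι → Type*} [∀ i, AddGroup (G i)] [∀ i, DecidableEq (G i)]
    (α β : ∀ i, G i) :
    hammingNorm (α + β) ≤ hammingNorm α + hammingNorm β := by
  simpa only [hammingDist_eq_hammingNorm, neg_neg, neg_zero, add_zero, zero_add] using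
    hammingDist_triangle (-α) 0 β

variable [DecidableEq R]

/-- The functions on `ι → R` whose Fourier transform is supported on vectors of Hamming weight at
most `m`. -/
def lowWeightSpan (ψ : AddChar R ℂ) (ι : Type*) [Fintype ι] (m : ℕ) :
    Submodule ℂ ((ι → R) → ℂ) :=
  Submodule.span ℂ ((fun γ => ⇑(dotChar ψ γ)) '' {γ | hammingNorm γ ≤ m})

variable {ψ : AddChar R ℂ} {m n : ℕ} {F G : (ι → R) → ℂ}

lemma dotChar_mem_lowWeightSpan {γ : ι → R} (hγ : hammingNorm γ ≤ m) :
    ⇑(dotChar ψ γ) ∈ lowWeightSpan ψ ι m :=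
  Submodule.subset_span (Set.mem_image_of_mem _ hγ)

lemma mul_mem_lowWeightSpan (hF : F ∈ lowWeightSpan ψ ι m) (hG : G ∈ lowWeightSpan ψ ι n) :
    F * G ∈ lowWeightSpan ψ ι (m + n) := by
  have hle : lowWeightSpan ψ ι m * lowWeightSpan ψ ι n ≤ lowWeightSpan ψ ι (m + n) := by
    rw [lowWeightSpan, lowWeightSpan, Submodule.span_mul_span, Submodule.span_le]
    rintro _ ⟨_, ⟨α, hα, rfl⟩, _, ⟨β, hβ, rfl⟩, rfl⟩
    have hmul : ⇑(dotChar ψ α) * ⇑(dotChar ψ β) = ⇑(dotChar ψ (α + β)) := by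
      rw [map_add, AddChar.coe_add]
    simp only [hmul]
    exact dotChar_mem_lowWeightSpan ((hammingNorm_add_le α β).trans (add_le_add hα hβ))
  exact hle (Submodule.mul_mem_mul hF hG)

lemma one_mem_lowWeightSpan : (1 : (ι → R) → ℂ) ∈ lowWeightSpan ψ ι 0 := by
  have h := dotChar_mem_lowWeightSpan (ψ := ψ) (γ := (0 : ι → R)) hammingNorm_zero.le
  rwa [map_zero, AddChar.coe_zero] at h

lemma pow_mem_lowWeightSpan (hF : F ∈ lowWeightSpan ψ ι m) (n : ℕ) :
    F ^ n ∈ lowWeightSpan ψ ι (n * m) := by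
  induction n with
  | zero => simpa using one_mem_lowWeightSpan
  | succ n ih =>
    rw [pow_succ, Nat.succ_mul]
    exact mul_mem_lowWeightSpan ih hF

variable [Finite R]

lemma star_mem_lowWeightSpan (hF : F ∈ lowWeightSpan ψ ι m) : star F ∈ lowWeightSpan ψ ι m := by
  induction hF using Submodule.span_induction with
  | mem F hF =>
    obtain ⟨γ, hγ, rfl⟩ := hF
    have hstar : star ⇑(dotChar ψ γ) = ⇑(dotChar ψ (-γ)) := by
      ext f
      rw [map_neg, AddChar.neg_apply, AddChar.map_neg_eq_conj]
      rfl
    simp only [hstar]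
    refine dotChar_mem_lowWeightSpan ?_
    simpa [hammingNorm] using hγ
  | zero => simp
  | add F G _ _ hF hG => simpa using add_mem hF hG
  | smul a F _ hF => simpa using Submodule.smul_mem _ (star a) hF

lemma norm_pow_mem_lowWeightSpan (hF : F ∈ lowWeightSpan ψ ι m) (k : ℕ) :
    (fun f => (‖F f‖ : ℂ) ^ (2 * k)) ∈ lowWeightSpan ψ ι (2 * k * m) := by
  have hpow : (fun f => (‖F f‖ : ℂ) ^ (2 * k)) = (F * star F) ^ k := by
    ext f
    simp [pow_mul, Complex.mul_conj']
  rw [hpow, mul_right_comm, mul_comm, two_mul]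
  exact pow_mem_lowWeightSpan (mul_mem_lowWeightSpan hF (star_mem_lowWeightSpan hF)) k

end LowWeight

section DualDistance

variable [Fintype R] [DecidableEq R] [DecidableEq ι] {ψ : AddChar R ℂ} {C : Submodule R (ι → R)}
  [Fintype C] {m : ℕ} {F : (ι → R) → ℂ}

lemma expect_code_eq_expect (hψ : ψ.IsPrimitive)
    (hC : ∀ γ ∈ dualCode C, γ ≠ 0 → m < hammingNorm γ) (hF : F ∈ lowWeightSpan ψ ι m) :
    𝔼 f : C, F f = 𝔼 f, F f := by
  induction hF using Submodule.span_induction with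
  | mem F hF =>
    obtain ⟨γ, hγ, rfl⟩ := hF
    have hγC : codeChar ψ C γ = 0 ↔ dotChar ψ γ = 0 := by
      rw [codeChar_eq_zero_iff hψ, dotChar_eq_zero_iff hψ]
      exact ⟨fun h => by_contra fun hne => (hC γ h hne).not_ge hγ, fun h => h ▸ zero_mem _⟩
    calc 𝔼 f : C, dotChar ψ γ f = if codeChar ψ C γ = 0 then 1 else 0 :=
          AddChar.expect_eq_ite (codeChar ψ C γ)
      _ = 𝔼 f, dotChar ψ γ f := by simp only [hγC, AddChar.expect_eq_ite]
  | zero => simp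
  | add F G _ _ hF hG => simp only [Pi.add_apply, Finset.expect_add_distrib, hF, hG]
  | smul a F _ hF => simp only [Pi.smul_apply, ← Finset.smul_expect, hF]

theorem expect_norm_pow_eq_expect_norm_codeLift_pow (hψ : ψ.IsPrimitive) {k t : ℕ}
    (hC : ∀ γ ∈ dualCode C, γ ≠ 0 → 2 * k * t < hammingNorm γ) {Λ : Finset (ι → R)}
    (hΛ : ∀ β, ∃! α, α ∈ Λ ∧ β - α ∈ dualCode C) {B : C → ℂ}
    (hB : ∀ α ∈ Λ, t < hammingNorm α → codeFourierCoeff ψ B α = 0) :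
    𝔼 f, ‖B f‖ ^ (2 * k) = 𝔼 f, ‖codeLift ψ Λ B f‖ ^ (2 * k) := by
  have hlow : codeLift ψ Λ B ∈ lowWeightSpan ψ ι t := by
    refine Submodule.sum_mem _ fun α hα => ?_
    obtain hle | hlt := le_or_gt (hammingNorm α) t
    · exact Submodule.smul_mem _ _ (dotChar_mem_lowWeightSpan hle)
    · rw [hB α hα hlt, zero_smul]
      exact zero_mem _
  have havg := expect_code_eq_expect hψ hC (norm_pow_mem_lowWeightSpan hlow k)
  simp only [codeLift_coe hψ hΛ] at havg
  exact_mod_cast havg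

end DualDistance

end Codes

section F3

open ZMod (stdAddChar)

variable {r d : ℕ}

lemma mem_polySet {f : Fn r} : f ∈ PolySet r d ↔ f ∈ reedMuller (Fin r) F3 d := by
  rw [mem_reedMuller]
  constructor
  · rintro ⟨P, hP, -, hf⟩
    exact ⟨P, hP, hf⟩
  · rintro ⟨P, hP, hf⟩
    obtain ⟨Q, hQP, hQ, heval⟩ := exists_degreeOf_le_eval_eq P
    exact ⟨Q, hQP.trans hP, hQ, fun x => (hf x).trans (heval x).symm⟩

lemma mem_dualSet_polySet {γ : Fn r} :
    γ ∈ dualSet r (PolySet r d) ↔ γ ∈ dualCode (reedMuller (Fin r) F3 d) := by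
  simp only [mem_dualCode, ← mem_polySet]
  rfl

lemma chi_eq_dotChar (α f : Fn r) : chi α f = dotChar stdAddChar α f := by
  rw [dotChar_apply, ZMod.stdAddChar_apply, ZMod.toCircle_apply, chi, ω, ← Complex.exp_nat_mul]
  congr 1
  simp only [dotF, dotProduct]
  push_cast
  ring

variable [Fintype (reedMuller (Fin r) F3 d)]

lemma sum_polyFinset_div_card {𝕜 : Type*} [Field 𝕜] [CharZero 𝕜] (A : Fn r → 𝕜) :
    (∑ f ∈ polyFinset r d, A f) / (polyFinset r d).card =
      𝔼 f : reedMuller (Fin r) F3 d, A f := by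
  have hmem (f : Fn r) : f ∈ polyFinset r d ↔ f ∈ reedMuller (Fin r) F3 d := by
    rw [polyFinset, Set.Finite.mem_toFinset, mem_polySet]
  rw [Fintype.expect_eq_sum_div_card, Finset.sum_subtype _ hmem, Fintype.card_of_subtype _ hmem]

lemma fourierP_eq_codeFourierCoeff (B : Fn r → ℂ) (α : Fn r) :
    fourierP r d B α =
      codeFourierCoeff stdAddChar (fun f : reedMuller (Fin r) F3 d => B f) α := by
  rw [fourierP, sum_polyFinset_div_card, codeFourierCoeff]
  simp only [chi_eq_dotChar]
  rfl

lemma sum_fourierP_mul_chi (Λ : Finset (Fn r)) (B : Fn r → ℂ) (f : Fn r) :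
    ∑ α ∈ Λ, fourierP r d B α * chi α f =
      codeLift stdAddChar Λ (fun f : reedMuller (Fin r) F3 d => B f) f := by
  simp only [codeLift, Finset.sum_apply, Pi.smul_apply, smul_eq_mul, fourierP_eq_codeFourierCoeff,
    chi_eq_dotChar]

lemma lt_reedMullerDualDist_three {d k t : ℕ} (h : (2 * k * t : ℝ) ≤ (3 : ℝ) ^ ((d : ℝ) - 1)) :
    2 * k * t < reedMullerDualDist 3 (2 * d + 1) := by
  have hdist : reedMullerDualDist 3 (2 * d + 1) = 2 * 3 ^ d := by
    rw [reedMullerDualDist, show (2 * d + 1) % 2 = 1 by lia, show (2 * d + 1) / 2 = d by lia]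
  rw [Real.rpow_sub_one three_ne_zero, Real.rpow_natCast] at h
  have h3 : (0 : ℝ) < 3 ^ d := by positivity
  have hreal : (2 * k * t : ℝ) < 2 * 3 ^ d := by linarith
  rw [hdist]
  exact_mod_cast hreal

end F3

theorem stmt14_general {K σ : Type*} [Field K] [Fintype K] [DecidableEq K] [Fintype σ]
    [DecidableEq σ] {ψ : AddChar K ℂ} (hψ : ψ.IsPrimitive) {D k t : ℕ} [Fintype (reedMuller σ K D)]
    (hkt : 2 * k * t < reedMullerDualDist (Fintype.card K) (D + 1)) {Λ : Finset ((σ → K) → K)}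
    (hΛ : ∀ β, ∃! α, α ∈ Λ ∧ β - α ∈ dualCode (reedMuller σ K D)) {B : reedMuller σ K D → ℂ}
    (hB : ∀ α ∈ Λ, t < hammingNorm α → codeFourierCoeff ψ B α = 0) :
    𝔼 f, ‖B f‖ ^ (2 * k) = 𝔼 f, ‖codeLift ψ Λ B f‖ ^ (2 * k) := by
  refine expect_norm_pow_eq_expect_norm_codeLift_pow hψ
    (fun γ hγ hγ0 => hkt.trans_le (reedMullerDualDist_le_hammingNorm hγ0 fun P hP => ?_)) hΛ hB
  exact mem_dualCode.mp hγ _ (mem_reedMuller.mpr ⟨P, Nat.lt_succ_iff.mp hP, fun _ => rfl⟩)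

/-- Lifting lemma (Lemma 3.6): for `k ≥ 1` and `2kt ≤ 3^{d−1}`, if `B : P_{r,2d} → ℂ` has
Fourier support (w.r.t. minimal-support representatives `Λ`) on levels at most `t`, then
the `2k`-norm of `B` over `P_{r,2d}` equals the `2k`-norm of its lift
`B' = Σ_{α∈Λ} B̂(α) χ_α` over all of `𝔉_r`. -/
theorem stmt14 (r d k t : ℕ) (hk : 1 ≤ k) (hkt : (2 * k * t : ℝ) ≤ (3 : ℝ) ^ ((d : ℝ) - 1))
    (Λ : Finset (Fn r)) (hΛ : IsMinRepSet r (2 * d) Λ)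
    (B : Fn r → ℂ) (hB : ∀ α ∈ Λ, t < supp α → fourierP r (2 * d) B α = 0) :
    ((∑ f ∈ polyFinset r (2 * d), ‖B f‖ ^ (2 * k)) /
        ((polyFinset r (2 * d)).card : ℝ)) ^ (1 / (2 * (k : ℝ)))
      = ((∑ f : Fn r, ‖∑ α ∈ Λ, fourierP r (2 * d) B α * chi α f‖ ^ (2 * k)) /
          (Fintype.card (Fn r) : ℝ)) ^ (1 / (2 * (k : ℝ))) := by
  have := Fintype.ofFinite (reedMuller (Fin r) F3 (2 * d))
  simp only [fourierP_eq_codeFourierCoeff] at hB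
  simp only [IsMinRepSet, mem_dualSet_polySet] at hΛ
  simp only [sum_polyFinset_div_card, sum_fourierP_mul_chi, ← Fintype.expect_eq_sum_div_card]
  rw [stmt14_general (ZMod.isPrimitive_stdAddChar 3) (lt_reedMullerDualDist_three hkt) hΛ.1 hB]
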